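/- Let (X, μ) be a standard Borel space with a non-atomic Borel probability measure μ. Let κ = (u₁,…,u_t) and κ′ = (v₁,…,v_{t′}) be tuples of nonzero integers and let R = {r ∈ S_t : (v₁,…,v_{t′}) = r(u₁,…,u_t)} (in particular R = ∅ if t ≠ t′). Then for comeagerly many f ∈ L⁰(μ,𝕋), the functions f^κ and f^{κ′} are almost R-disjoint. -/

import Mathlib

/-!
The values of a generic `f ∈ L⁰(μ, 𝕋)` are multiplicatively independent off a null set `A`. Given
this, `f^κ(x) = f^{κ′}(y)` is an equality of two `ℤ`-linear combinations of independent elements,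
so the formal sums `∑ κᵢ xᵢ` and `∑ κ′ⱼ yⱼ` agree; as all coefficients are nonzero, `y` is a
rearrangement of `x` that carries `κ` to `κ′`.

For the independence fix `m ∈ ℤˢ ∖ {0}`. Requiring `∏ₖ f(zₖ)^{mₖ}` to stay at a positive distance
from `1`, off a set of measure less than `η`, for all tuples `z` which a finite measurable partition
separates is an open condition by Markov's inequality. It is dense: approximate `f` by a simple
function, refine its level sets by the partition, and move its finitely many values to independent
ones, which are dense in `𝕋ⁿ` since proper subgroups of a connected group have dense complement.
Along partitions that eventually separate any two points, with `η = 2⁻ⁿ`, Borel–Cantelli gives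
the null set.
-/

open MeasureTheory Set

/-- The Borel σ-algebra on the circle group `𝕋 ⊆ ℂ`. -/
noncomputable instance : MeasurableSpace Circle := borel Circle
instance : BorelSpace Circle := ⟨rfl⟩

/-- The metric `d(f,g) = ∫ |f − g| dμ` inducing the topology of convergence in measure
on `L⁰(μ, 𝕋)`. -/
noncomputable def L0dist {Y : Type*} [MeasurableSpace Y] (ν : Measure Y)
    (f g : Y →ₘ[ν] Circle) : ℝ :=
  ∫ x, ‖(f x : ℂ) - (g x : ℂ)‖ ∂ν

/-- The topology of convergence in measure on `L⁰(μ, 𝕋)`: the topology induced by the metric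
`L0dist`, i.e. generated by the open balls of that metric. -/
noncomputable instance L0top {Y : Type*} [MeasurableSpace Y] (ν : Measure Y) :
    TopologicalSpace (Y →ₘ[ν] Circle) :=
  TopologicalSpace.generateFrom
    {U | ∃ (f : Y →ₘ[ν] Circle) (ε : ℝ), 0 < ε ∧ U = {g | L0dist ν f g < ε}}

/-- `f^κ(x₁,…,x_t) = ∏ᵢ f(xᵢ)^{κᵢ}`. -/
noncomputable def fpow {X : Type*} {t : ℕ} (f : X → Circle) (κ : Fin t → ℤ) :
    (Fin t → X) → Circle :=
  fun x => ∏ i, f (x i) ^ κ i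

/-- `f^κ` and `f^{κ′}` are almost `R`-disjoint: away from a μ-null Borel set `A`, whenever
`x₁,…,x_t` are pairwise distinct, `y₁,…,y_{t′}` are pairwise distinct, and
`f^κ(x) = f^{κ′}(y)`, we have `t = t′` and `y = r(x)` for some `r ∈ R`. -/
def AlmostRDisjoint {X : Type*} [MeasurableSpace X] (μ : Measure X) {t t' : ℕ}
    (f : X → Circle) (κ : Fin t → ℤ) (κ' : Fin t' → ℤ)
    (R : Set (Equiv.Perm (Fin t))) : Prop :=
  ∃ A : Set X, MeasurableSet A ∧ μ A = 0 ∧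
    ∀ (x : Fin t → X) (y : Fin t' → X),
      (∀ i, x i ∉ A) → (∀ j, y j ∉ A) →
      Function.Injective x → Function.Injective y →
      fpow f κ x = fpow f κ' y →
      ∃ h : t = t', ∃ r ∈ R, ∀ i : Fin t, y (Fin.cast h i) = x (r i)

open Filter Function Topology

section MultiplicativeIndependence

variable {ι X G : Type*} [CommGroup G]

theorem linearIndependent_ofMul_iff [Fintype ι] {c : ι → G} :
    LinearIndependent ℤ (Additive.ofMul ∘ c) ↔ ∀ m : ι → ℤ, ∏ i, c i ^ m i = 1 → m = 0 := by
  simp only [Fintype.linearIndependent_iff, comp_apply, ← ofMul_zpow, ← ofMul_prod, ofMul_eq_zero,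
    funext_iff, Pi.zero_apply]

theorem linearIndepOn_ofMul_of_prod_zpow_ne_one {f : X → G} {s : Set X}
    (h : ∀ (n : ℕ) (m : Fin n → ℤ), m ≠ 0 → ∀ z : Fin n → X, (∀ k, z k ∈ s) → Injective z →
      ∏ k, f (z k) ^ m k ≠ 1) :
    LinearIndepOn ℤ (Additive.ofMul ∘ f) s := by
  rw [linearIndepOn_iff_linearIndepOn_finset]
  intro S hS
  let e := S.equivFin
  have he : LinearIndependent ℤ (Additive.ofMul ∘ fun k ↦ f (e.symm k)) := by
    rw [linearIndependent_ofMul_iff]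
    intro m hm
    contrapose! hm
    exact h _ m hm _ (fun k ↦ hS (e.symm k).2) (Subtype.val_injective.comp e.symm.injective)
  exact (linearIndependent_equiv e.symm).1 he

end MultiplicativeIndependence

section CircleTuples

theorem dense_compl_of_subgroup_ne_top {G : Type*} [Group G] [TopologicalSpace G]
    [SeparatelyContinuousMul G] [PreconnectedSpace G] {H : Subgroup G} (hH : H ≠ ⊤) :
    Dense (H : Set G)ᶜ := by
  rw [← interior_eq_empty_iff_dense_compl]
  contrapose! hH
  obtain ⟨g, hg⟩ := hH
  have hopen : IsOpen (H : Set G) := H.isOpen_of_mem_nhds (mem_interior_iff_mem_nhds.1 hg)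
  have hclopen : IsClopen (H : Set G) := ⟨H.isClosed_of_isOpen hopen, hopen⟩
  exact SetLike.coe_injective (hclopen.eq_univ ⟨1, H.one_mem⟩)

theorem exists_circle_zpow_ne_one {n : ℤ} (hn : n ≠ 0) : ∃ u : Circle, u ^ n ≠ 1 := by
  refine ⟨Circle.exp (Real.pi / n), ?_⟩
  rw [← Circle.exp_zsmul, zsmul_eq_mul, mul_div_cancel₀ _ (Int.cast_ne_zero.2 hn)]
  exact Circle.exp_pi_ne_one

variable {ι : Type*}

theorem dense_setOf_prod_zpow_ne_one [Fintype ι] {m : ι → ℤ} (hm : m ≠ 0) :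
    Dense {c : ι → Circle | ∏ i, c i ^ m i ≠ 1} := by
  classical
  let χ : (ι → Circle) →* Circle := ∏ i, (zpowGroupHom (m i)).comp (Pi.evalMonoidHom _ i)
  have hχ (c : ι → Circle) : χ c = ∏ i, c i ^ m i := by
    simp [χ, MonoidHom.finsetProd_apply]
  have hker : χ.ker ≠ ⊤ := by
    obtain ⟨i, hi⟩ := ne_iff.1 hm
    obtain ⟨u, hu⟩ := exists_circle_zpow_ne_one hi
    intro htop
    have hmem : Pi.mulSingle i u ∈ χ.ker := htop ▸ Subgroup.mem_top _
    rw [MonoidHom.mem_ker, hχ, Fintype.prod_eq_single i fun j hj ↦ by simp [hj]] at hmem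
    exact hu (by simpa using hmem)
  convert dense_compl_of_subgroup_ne_top hker using 1
  ext c
  simp [hχ]

theorem dense_setOf_linearIndependent_circle [Finite ι] :
    Dense {c : ι → Circle | LinearIndependent ℤ (Additive.ofMul ∘ c)} := by
  have := Fintype.ofFinite ι
  have hdense : Dense (⋂ m ∈ {m : ι → ℤ | m ≠ 0}, {c : ι → Circle | ∏ i, c i ^ m i ≠ 1}) :=
    dense_biInter_of_isOpen
      (fun m _ ↦ isOpen_ne_fun (by fun_prop) continuous_const)
      (to_countable _) fun m hm ↦ dense_setOf_prod_zpow_ne_one hm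
  convert hdense using 1
  ext c
  simp only [linearIndependent_ofMul_iff, mem_iInter, mem_ofPred_eq]
  exact forall_congr' fun m ↦ not_imp_not.symm

end CircleTuples

section IntegralDist

variable {X E : Type*} [MeasurableSpace X] {μ : Measure X} [IsFiniteMeasure μ]
  [PseudoMetricSpace E] [BoundedSpace E] {f g : X → E}

theorem integrable_dist_of_boundedSpace (hf : AEStronglyMeasurable f μ)
    (hg : AEStronglyMeasurable g μ) : Integrable (fun x ↦ dist (f x) (g x)) μ := by
  refine .of_bound (hf.dist hg) (Metric.diam (univ : Set E)) (ae_of_all _ fun x ↦ ?_)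
  rw [Real.norm_of_nonneg dist_nonneg]
  exact Metric.dist_le_diam_of_mem (Bornology.IsBounded.all _) (mem_univ _) (mem_univ _)

theorem exists_simpleFunc_integral_dist_lt (hf : StronglyMeasurable f) {ε : ℝ} (hε : 0 < ε) :
    ∃ φ : SimpleFunc X E, ∫ x, dist (f x) (φ x) ∂μ < ε := by
  have hlim : Tendsto (fun n ↦ ∫ x, dist (f x) (hf.approx n x) ∂μ) atTop
      (𝓝 (∫ _, (0 : ℝ) ∂μ)) := by
    refine tendsto_integral_of_dominated_convergence (fun _ ↦ Metric.diam (univ : Set E))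
      (fun n ↦ (hf.dist (hf.approx n).stronglyMeasurable).aestronglyMeasurable)
      (integrable_const _) (fun n ↦ ae_of_all _ fun x ↦ ?_) (ae_of_all _ fun x ↦ ?_)
    · rw [Real.norm_of_nonneg dist_nonneg]
      exact Metric.dist_le_diam_of_mem (Bornology.IsBounded.all _) (mem_univ _) (mem_univ _)
    · simpa only [dist_self] using (tendsto_const_nhds (x := f x)).dist (hf.tendsto_approx x)
  rw [integral_zero] at hlim
  obtain ⟨n, hn⟩ := (hlim.eventually_lt_const hε).exists
  exact ⟨_, hn⟩

end IntegralDist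

section L0

theorem generateFrom_setOf_dist_lt (α : Type*) [PseudoMetricSpace α] :
    TopologicalSpace.generateFrom {U | ∃ (x : α) (ε : ℝ), 0 < ε ∧ U = {y | dist x y < ε}} =
      UniformSpace.toTopologicalSpace := by
  have hball (x : α) (ε : ℝ) : {y | dist x y < ε} = Metric.ball x ε :=
    ext fun _ ↦ Metric.mem_ball'.symm
  simp only [hball]
  refine ((TopologicalSpace.isTopologicalBasis_of_isOpen_of_nhds ?_ ?_).eq_generateFrom).symm
  · rintro _ ⟨x, ε, -, rfl⟩
    exact Metric.isOpen_ball
  · intro x U hx hU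
    obtain ⟨ε, hε, hεU⟩ := Metric.isOpen_iff.1 hU x hx
    exact ⟨Metric.ball x ε, ⟨x, ε, hε, rfl⟩, Metric.mem_ball_self hε, hεU⟩

variable {X : Type*} [MeasurableSpace X] {μ : Measure X}

theorem L0dist_eq_integral_dist (f g : X →ₘ[μ] Circle) :
    L0dist μ f g = ∫ x, dist (f x) (g x) ∂μ := by
  have hdist (z w : Circle) : dist z w = ‖(z : ℂ) - w‖ := dist_eq_norm (z : ℂ) w
  simp only [L0dist, hdist]

variable [IsFiniteMeasure μ]

variable (μ) in
/-- `L0dist` as a pseudometric on `L⁰(μ, 𝕋)`, carrying the topology built from its balls;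
`L0PseudoMetricSpace` replaces that topology by the propositionally equal `L0top`. -/
@[reducible]
noncomputable def L0PseudoMetricAux : PseudoMetricSpace (X →ₘ[μ] Circle) where
  dist := L0dist μ
  dist_self f := by simp [L0dist_eq_integral_dist]
  dist_comm f g := by simp only [L0dist_eq_integral_dist, dist_comm]
  dist_triangle f g h := by
    have hint (f g : X →ₘ[μ] Circle) : Integrable (fun x ↦ dist (f x) (g x)) μ :=
      integrable_dist_of_boundedSpace f.aestronglyMeasurable g.aestronglyMeasurable
    simp only [L0dist_eq_integral_dist]
    rw [← integral_add (hint f g) (hint g h)]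
    exact integral_mono (hint f h) ((hint f g).add (hint g h)) fun x ↦ dist_triangle _ _ _

/-- `L⁰(μ, 𝕋)` as a pseudometric space with distance `L0dist` and topology `L0top`. -/
noncomputable instance L0PseudoMetricSpace : PseudoMetricSpace (X →ₘ[μ] Circle) :=
  (L0PseudoMetricAux μ).replaceTopology
    (@generateFrom_setOf_dist_lt (X →ₘ[μ] Circle) (L0PseudoMetricAux μ))

theorem dist_L0_eq_integral_dist (f g : X →ₘ[μ] Circle) :
    dist f g = ∫ x, dist (f x) (g x) ∂μ :=
  L0dist_eq_integral_dist f g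

theorem mul_measureReal_le_dist_L0 (f g : X →ₘ[μ] Circle) (δ : ℝ) :
    δ * μ.real {x | δ ≤ dist (f x) (g x)} ≤ dist f g := by
  rw [dist_L0_eq_integral_dist]
  exact mul_meas_ge_le_integral_of_nonneg (ae_of_all _ fun _ ↦ dist_nonneg)
    (integrable_dist_of_boundedSpace f.aestronglyMeasurable g.aestronglyMeasurable) δ

theorem dist_L0_le_integral_dist_add {f g : X →ₘ[μ] Circle} {φ ψ : X → Circle}
    (hφ : AEStronglyMeasurable φ μ) (hg : g =ᵐ[μ] ψ) {δ : ℝ} (hφψ : ∀ x, dist (φ x) (ψ x) ≤ δ) :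
    dist f g ≤ ∫ x, dist (f x) (φ x) ∂μ + μ.real univ * δ := by
  have hfφ := integrable_dist_of_boundedSpace f.aestronglyMeasurable hφ
  calc dist f g = ∫ x, dist (f x) (g x) ∂μ := dist_L0_eq_integral_dist f g
    _ ≤ ∫ x, (dist (f x) (φ x) + δ) ∂μ := by
      refine integral_mono_ae
        (integrable_dist_of_boundedSpace f.aestronglyMeasurable g.aestronglyMeasurable)
        (hfφ.add (integrable_const δ)) ?_
      filter_upwards [hg] with x hx
      rw [hx]
      exact (dist_triangle _ (φ x) _).trans (by gcongr; exact hφψ x)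
    _ = ∫ x, dist (f x) (φ x) ∂μ + μ.real univ * δ := by
      rw [integral_add hfφ (integrable_const δ), integral_const, smul_eq_mul]

end L0

section Separated

variable {X B σ : Type*} [MeasurableSpace X] [Fintype σ] (μ : Measure X)

/-- The functions `f ∈ L⁰(μ, 𝕋)` for which, off a set of measure less than `η`, the products
`∏ₖ f(zₖ)^{mₖ}` stay at a positive distance from `1` when `z` ranges over the tuples whose labels
`π(zₖ)` are pairwise distinct. Asking for distinct labels in place of distinct points, with a
uniform bound, is what makes these sets open, and dense when there are finitely many labels. -/
def separatedSet (π : X → B) (η : ℝ) (m : σ → ℤ) : Set (X →ₘ[μ] Circle) :=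
  {f | ∃ C : Set X, MeasurableSet C ∧ μ.real Cᶜ < η ∧ ∃ ε > 0, ∀ z : σ → X, (∀ k, z k ∈ C) →
    Injective (π ∘ z) → ε ≤ dist (∏ k, f (z k) ^ m k) 1}

variable {μ}

theorem isOpen_separatedSet [IsFiniteMeasure μ] (π : X → B) (η : ℝ) (m : σ → ℤ) :
    IsOpen (separatedSet μ π η m) := by
  rw [Metric.isOpen_iff]
  rintro f ⟨C, hC, hμC, ε, hε, hf⟩
  have huc : UniformContinuous fun c : σ → Circle ↦ ∏ k, c k ^ m k :=
    CompactSpace.uniformContinuous_of_continuous (by fun_prop)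
  obtain ⟨δ, hδ, hclose⟩ := Metric.uniformContinuous_iff.1 huc (ε / 2) (half_pos hε)
  refine ⟨δ * (η - μ.real Cᶜ), mul_pos hδ (sub_pos.2 hμC), fun g hg ↦ ?_⟩
  let D := {x | δ ≤ dist (f x) (g x)}
  have hD : MeasurableSet D := measurableSet_le measurable_const (f.measurable.dist g.measurable)
  have hμD : μ.real D < η - μ.real Cᶜ :=
    lt_of_mul_lt_mul_left
      ((mul_measureReal_le_dist_L0 f g δ).trans_lt (Metric.mem_ball'.1 hg)) hδ.le
  refine ⟨C \ D, hC.diff hD, ?_, ε / 2, half_pos hε, fun z hz hinj ↦ ?_⟩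
  · rw [sdiff_eq, compl_inter, compl_compl]
    linarith [measureReal_union_le (μ := μ) Cᶜ D]
  · have hfz : ε ≤ dist (∏ k, f (z k) ^ m k) 1 := hf z (fun k ↦ (hz k).1) hinj
    have hfg : dist (∏ k, f (z k) ^ m k) (∏ k, g (z k) ^ m k) < ε / 2 :=
      hclose ((dist_pi_lt_iff hδ).2 fun k ↦ not_le.1 (hz k).2)
    linarith [dist_triangle (∏ k, f (z k) ^ m k) (∏ k, g (z k) ^ m k) 1]

theorem mem_separatedSet_of_ae_eq_comp {F : Type*} [Finite F] [MeasurableSpace F]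
    [DiscreteMeasurableSpace F] {q : X → F} (hq : Measurable q) (p : F → B) {c : F → Circle}
    (hc : LinearIndependent ℤ (Additive.ofMul ∘ c)) {g : X →ₘ[μ] Circle} (hg : g =ᵐ[μ] c ∘ q)
    {η : ℝ} (hη : 0 < η) {m : σ → ℤ} (hm : m ≠ 0) : g ∈ separatedSet μ (p ∘ q) η m := by
  have hne (i : {i : σ → F // Injective i}) : ∏ k, c (i.1 k) ^ m k ≠ 1 := fun h ↦
    hm (linearIndependent_ofMul_iff.1 (hc.comp i.1 i.2) m h)
  obtain ⟨ε, hε, hball⟩ := Metric.isOpen_iff.1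
    (finite_range fun i : {i : σ → F // Injective i} ↦ ∏ k, c (i.1 k) ^ m k).isClosed.isOpen_compl
    1 (by simpa using hne)
  refine ⟨{x | g x = c (q x)},
    measurableSet_eq_fun g.measurable ((measurable_of_finite c).comp hq), ?_, ε, hε,
    fun z hz hinj ↦ ?_⟩
  · have hnull : μ {x | g x = c (q x)}ᶜ = 0 := hg
    rwa [measureReal_def, hnull, ENNReal.toReal_zero]
  · have hqz : Injective (q ∘ z) := Injective.of_comp (f := p) hinj
    rw [Finset.prod_congr rfl fun k _ ↦ congrArg (· ^ m k) (hz k)]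
    by_contra! hlt
    exact hball hlt ⟨⟨q ∘ z, hqz⟩, rfl⟩

theorem dense_separatedSet [IsFiniteMeasure μ] [Finite B] [MeasurableSpace B]
    [DiscreteMeasurableSpace B] {π : X → B} (hπ : Measurable π) {η : ℝ} (hη : 0 < η) {m : σ → ℤ}
    (hm : m ≠ 0) : Dense (separatedSet μ π η m) := by
  rw [Metric.dense_iff]
  intro f ε hε
  have := Fintype.ofFinite B
  obtain ⟨φ, hφ⟩ := exists_simpleFunc_integral_dist_lt f.stronglyMeasurable (μ := μ) (half_pos hε)
  obtain ⟨δ, hδ, hδε⟩ := exists_pos_mul_lt (half_pos hε) (μ.real univ)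
  let q : X → φ.range × B := fun x ↦ (⟨φ x, φ.mem_range_self x⟩, π x)
  have hq : Measurable q := φ.measurable.subtype_mk.prodMk hπ
  obtain ⟨c, hc_dist, hc⟩ := Metric.dense_iff.1 dense_setOf_linearIndependent_circle
    (fun a : φ.range × B ↦ (a.1 : Circle)) δ hδ
  let g : X →ₘ[μ] Circle :=
    AEEqFun.mk (c ∘ q) ((measurable_of_finite c).comp hq).aestronglyMeasurable
  have hg : g =ᵐ[μ] c ∘ q := AEEqFun.coeFn_mk _ _
  refine ⟨g, Metric.mem_ball'.2 ?_, mem_separatedSet_of_ae_eq_comp hq Prod.snd hc hg hη hm⟩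
  have hφc (x : X) : dist (φ x) (c (q x)) ≤ δ :=
    (dist_comm _ _).trans_le (((dist_pi_lt_iff hδ).1 hc_dist (q x)).le)
  linarith [dist_L0_le_integral_dist_add (f := f) φ.aestronglyMeasurable hg hφc]

end Separated

section Generic

theorem exists_measurable_eventually_separating (X : Type*) [MeasurableSpace X]
    [MeasurableSpace.CountablySeparated X] :
    ∃ π : (n : ℕ) → X → Fin n → Bool, (∀ n, Measurable (π n)) ∧
      ∀ x y, x ≠ y → ∀ᶠ n in atTop, π n x ≠ π n y := by
  obtain ⟨b, hb, hinj⟩ := MeasurableSpace.measurable_injection_nat_bool_of_countablySeparated X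
  refine ⟨fun n x j ↦ b x j, fun n ↦ by fun_prop, fun x y hxy ↦ ?_⟩
  obtain ⟨j, hj⟩ := ne_iff.1 (hinj.ne hxy)
  filter_upwards [eventually_gt_atTop j] with n hn h
  exact hj (congrFun h ⟨j, hn⟩)

theorem eventually_injective_comp {α X σ : Type*} {B : α → Type*} [Finite σ] {l : Filter α}
    {π : (a : α) → X → B a} (hπ : ∀ x y, x ≠ y → ∀ᶠ a in l, π a x ≠ π a y) {z : σ → X}
    (hz : Injective z) : ∀ᶠ a in l, Injective (π a ∘ z) := by
  have hpair (k k' : σ) : ∀ᶠ a in l, π a (z k) = π a (z k') → k = k' := by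
    rcases eq_or_ne k k' with hk | hk
    · exact .of_forall fun _ _ ↦ hk
    · filter_upwards [hπ _ _ (hz.ne hk)] with a ha h
      exact absurd h ha
  exact eventually_all.2 fun k ↦ eventually_all.2 fun k' ↦ hpair k k'

variable {X σ : Type*} [MeasurableSpace X] [Fintype σ] {μ : Measure X} [IsFiniteMeasure μ]

theorem exists_mem_ae_forall_prod_zpow_ne_one_of_mem_separatedSet {B : ℕ → Type*}
    {π : (n : ℕ) → X → B n} (hπ : ∀ x y, x ≠ y → ∀ᶠ n in atTop, π n x ≠ π n y) {m : σ → ℤ}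
    {f : X →ₘ[μ] Circle} (hf : ∀ n, f ∈ separatedSet μ (π n) ((1 / 2) ^ n) m) :
    ∃ s ∈ ae μ, ∀ z : σ → X, (∀ k, z k ∈ s) → Injective z → ∏ k, f (z k) ^ m k ≠ 1 := by
  choose C _ hμC ε hε hsep using hf
  have hle (n : ℕ) : μ (C n)ᶜ ≤ ENNReal.ofReal ((1 / 2) ^ n) := by
    rw [← ofReal_measureReal]
    exact ENNReal.ofReal_le_ofReal (hμC n).le
  have hsum : ∑' n, μ (C n)ᶜ ≠ ⊤ :=
    ne_top_of_le_ne_top summable_geometric_two.tsum_ofReal_ne_top (ENNReal.tsum_le_tsum hle)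
  refine ⟨{x | ∀ᶠ n in atTop, x ∉ (C n)ᶜ}, ae_eventually_notMem hsum, fun z hz hinj hone ↦ ?_⟩
  obtain ⟨n, hn, hninj⟩ := ((eventually_all.2 hz).and (eventually_injective_comp hπ hinj)).exists
  have := hsep n z (fun k ↦ not_not.1 (hn k)) hninj
  rw [hone, dist_self] at this
  exact (hε n).not_ge this

theorem eventually_residual_forall_prod_zpow_ne_one [MeasurableSpace.CountablySeparated X]
    {m : σ → ℤ} (hm : m ≠ 0) :
    ∀ᶠ f : X →ₘ[μ] Circle in residual _, ∃ s ∈ ae μ, ∀ z : σ → X, (∀ k, z k ∈ s) →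
      Injective z → ∏ k, f (z k) ^ m k ≠ 1 := by
  obtain ⟨π, hπ, hsep⟩ := exists_measurable_eventually_separating X
  have hres : ∀ᶠ f in residual _, ∀ n, f ∈ separatedSet μ (π n) ((1 / 2) ^ n) m :=
    eventually_countable_forall.2 fun n ↦ residual_of_dense_open
      (isOpen_separatedSet _ _ _) (dense_separatedSet (hπ n) (by positivity) hm)
  exact hres.mono fun f hf ↦ exists_mem_ae_forall_prod_zpow_ne_one_of_mem_separatedSet hsep hf

variable (μ) in
theorem eventually_residual_linearIndepOn_ofMul [MeasurableSpace.CountablySeparated X] :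
    ∀ᶠ f : X →ₘ[μ] Circle in residual _, ∃ s ∈ ae μ, LinearIndepOn ℤ (Additive.ofMul ∘ f) s := by
  have hres : ∀ᶠ f : X →ₘ[μ] Circle in residual _, ∀ (n : ℕ) (m : {m : Fin n → ℤ // m ≠ 0}),
      ∃ s ∈ ae μ, ∀ z : Fin n → X, (∀ k, z k ∈ s) → Injective z →
        ∏ k, f (z k) ^ m.1 k ≠ 1 :=
    eventually_countable_forall.2 fun n ↦ eventually_countable_forall.2 fun m ↦
      eventually_residual_forall_prod_zpow_ne_one m.2
  refine hres.mono fun f hf ↦ ?_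
  choose s hs hne using hf
  refine ⟨⋂ n, ⋂ m, s n m, countable_iInter_mem.2 fun n ↦ countable_iInter_mem.2 (hs n),
    linearIndepOn_ofMul_of_prod_zpow_ne_one fun n m hm z hz ↦ hne n ⟨m, hm⟩ z fun k ↦ ?_⟩
  exact mem_iInter₂.1 (hz k) n ⟨m, hm⟩

end Generic

section Disjointness

variable {ι ι' X M : Type*} [AddCommMonoid M]

theorem coe_support_mapDomain_of_injective {κ : ι →₀ M} (hκ : ∀ i, κ i ≠ 0) {x : ι → X}
    (hx : Injective x) : ((κ.mapDomain x).support : Set X) = range x := by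
  classical
  have hsupp : (κ.support : Set ι) = univ := by simpa [eq_univ_iff_forall] using hκ
  rw [Finsupp.mapDomain_support_of_injective hx, Finset.coe_image, hsupp, image_univ]

theorem exists_equiv_of_mapDomain_eq {κ : ι →₀ M} {κ' : ι' →₀ M} (hκ : ∀ i, κ i ≠ 0)
    (hκ' : ∀ j, κ' j ≠ 0) {x : ι → X} {y : ι' → X} (hx : Injective x) (hy : Injective y)
    (h : κ.mapDomain x = κ'.mapDomain y) :
    ∃ e : ι' ≃ ι, ∀ j, x (e j) = y j ∧ κ (e j) = κ' j := by
  have hrange : range y = range x := by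
    rw [← coe_support_mapDomain_of_injective hκ hx, ← coe_support_mapDomain_of_injective hκ' hy, h]
  let e : ι' ≃ ι :=
    (Equiv.ofInjective y hy).trans ((Equiv.setCongr hrange).trans (Equiv.ofInjective x hx).symm)
  have he (j : ι') : x (e j) = y j := Equiv.apply_ofInjective_symm hx _
  refine ⟨e, fun j ↦ ⟨he j, ?_⟩⟩
  rw [← Finsupp.mapDomain_apply hx κ, he, h, Finsupp.mapDomain_apply hy]

theorem ofMul_fpow_eq_linearCombination {t : ℕ} (f : X → Circle) (κ : Fin t → ℤ) (x : Fin t → X) :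
    Additive.ofMul (fpow f κ x) = Finsupp.linearCombination ℤ (Additive.ofMul ∘ f)
      ((Finsupp.equivFunOnFinite.symm κ).mapDomain x) := by
  rw [Finsupp.linearCombination_mapDomain, Finsupp.linearCombination_apply,
    Finsupp.sum_fintype _ _ (by simp)]
  simp [fpow, ofMul_prod]

theorem exists_equiv_of_fpow_eq {f : X → Circle} {s : Set X}
    (hf : LinearIndepOn ℤ (Additive.ofMul ∘ f) s) {t t' : ℕ} {κ : Fin t → ℤ} {κ' : Fin t' → ℤ}
    (hκ : ∀ i, κ i ≠ 0) (hκ' : ∀ j, κ' j ≠ 0) {x : Fin t → X} {y : Fin t' → X}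
    (hxs : ∀ i, x i ∈ s) (hys : ∀ j, y j ∈ s) (hx : Injective x) (hy : Injective y)
    (h : fpow f κ x = fpow f κ' y) :
    ∃ e : Fin t' ≃ Fin t, ∀ j, x (e j) = y j ∧ κ (e j) = κ' j := by
  refine exists_equiv_of_mapDomain_eq (κ := Finsupp.equivFunOnFinite.symm κ)
    (κ' := Finsupp.equivFunOnFinite.symm κ') hκ hκ' hx hy
    (linearIndepOn_iffₛ.1 hf _ ?_ _ ?_ ?_)
  · rw [Finsupp.mem_supported, coe_support_mapDomain_of_injective hκ hx]
    exact range_subset_iff.2 hxs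
  · rw [Finsupp.mem_supported, coe_support_mapDomain_of_injective hκ' hy]
    exact range_subset_iff.2 hys
  · rw [← ofMul_fpow_eq_linearCombination, ← ofMul_fpow_eq_linearCombination, h]

theorem almostRDisjoint_of_linearIndepOn [MeasurableSpace X] {μ : Measure X} {f : X → Circle}
    {s : Set X} (hs : s ∈ ae μ) (hf : LinearIndepOn ℤ (Additive.ofMul ∘ f) s) {t t' : ℕ}
    {κ : Fin t → ℤ} {κ' : Fin t' → ℤ} (hκ : ∀ i, κ i ≠ 0) (hκ' : ∀ j, κ' j ≠ 0) :
    AlmostRDisjoint μ f κ κ'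
      {r : Equiv.Perm (Fin t) | ∃ h : t = t', ∀ i, κ' (Fin.cast h i) = κ (r i)} := by
  have hmem {x : X} (hx : x ∉ toMeasurable μ sᶜ) : x ∈ s :=
    notMem_compl_iff.1 fun h ↦ hx (subset_toMeasurable μ _ h)
  refine ⟨toMeasurable μ sᶜ, measurableSet_toMeasurable μ _, (measure_toMeasurable _).trans hs,
    fun x y hxA hyA hx hy hxy ↦ ?_⟩
  obtain ⟨e, he⟩ := exists_equiv_of_fpow_eq hf hκ hκ' (fun i ↦ hmem (hxA i))
    (fun j ↦ hmem (hyA j)) hx hy hxy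
  obtain rfl : t' = t := Fin.equiv_iff_eq.1 ⟨e⟩
  exact ⟨rfl, e, ⟨rfl, fun i ↦ (he i).2.symm⟩, fun i ↦ (he i).1.symm⟩

end Disjointness

theorem statement5_general {X : Type*} [MeasurableSpace X] [MeasurableSpace.CountablySeparated X]
    (μ : Measure X) [IsFiniteMeasure μ] {t t' : ℕ} (κ : Fin t → ℤ) (κ' : Fin t' → ℤ)
    (hκ : ∀ i, κ i ≠ 0) (hκ' : ∀ j, κ' j ≠ 0) :
    {f : X →ₘ[μ] Circle |
        AlmostRDisjoint μ (⇑f) κ κ'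
          {r : Equiv.Perm (Fin t) | ∃ h : t = t', ∀ i, κ' (Fin.cast h i) = κ (r i)}} ∈
      residual (X →ₘ[μ] Circle) := by
  filter_upwards [eventually_residual_linearIndepOn_ofMul μ] with f ⟨s, hs, hf⟩
  exact almostRDisjoint_of_linearIndepOn hs hf hκ hκ'

/-- For `(X,μ)` a standard Borel space with a non-atomic Borel probability measure, tuples
`κ ∈ (ℤ∖{0})^t`, `κ′ ∈ (ℤ∖{0})^{t′}` and
`R = {r ∈ S_t : κ′ = r(κ)}`, for comeagerly many `f ∈ L⁰(μ,𝕋)` the functions `f^κ` and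
`f^{κ′}` are almost `R`-disjoint. -/
theorem statement5 {X : Type*} [MeasurableSpace X] [StandardBorelSpace X]
    (μ : Measure X) [IsProbabilityMeasure μ] [NullSingletonClass μ]
    {t t' : ℕ} (κ : Fin t → ℤ) (κ' : Fin t' → ℤ)
    (hκ : ∀ i, κ i ≠ 0) (hκ' : ∀ j, κ' j ≠ 0) :
    {f : X →ₘ[μ] Circle |
        AlmostRDisjoint μ (⇑f) κ κ'
          {r : Equiv.Perm (Fin t) | ∃ h : t = t', ∀ i, κ' (Fin.cast h i) = κ (r i)}} ∈
      residual (X →ₘ[μ] Circle) :=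
  statement5_general μ κ κ' hκ hκ'
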